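/- arXiv:2010.06092 — 2 statements merged into one kernel-verified Lean document; each statement's English description precedes it below -/
import Mathlib

section
/- For every bounded subset D ⊆ ℝⁿ the total energy contained in D is integrable over time: ∫₀^∞ ∫_{ℝⁿ} ∫_D f(x,ξ,t)|ξ|² dx dξ dt < ∞. -/
/-!
The proof is a Morawetz (virial) argument. Let `φ(x) = √(1 + |x|²)`, a convex function whose
gradient has norm less than `1`, and use the weight `w(x, ξ) = 1 + |ξ|² - ξ·∇φ(x) ≥ 0`. Along a
characteristic `x + sξ` the weight decreases at the rate `ξᵀ D²φ ξ`, so integrating the mild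
equation by parts in time (`integral_parts`) gives, for almost every `(x, ξ)`,
`∫₀ᵀ f (ξᵀ D²φ ξ) ds ≤ f w |_{t = 0} + ∫₀ᵀ g w ds`, all evaluated along the characteristic. For
fixed `x` the weight is a combination of `1`, `ξ`, `|ξ|²`, so the interaction term disappears
after integration in `(x, ξ)` (`integral_shear_mul_weight_eq_zero`), and the initial term is bounded
by mass and energy. This is a bound uniform in `T` (`morawetz_bound`). Finally
`ξᵀ D²φ ξ ≥ |ξ|² (1 + |x|²)^(-3/2)` (`le_hessForm`), which controls `|ξ|²` on bounded sets of `x`.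
-/

open MeasureTheory Real Filter Set
open scoped RealInnerProductSpace ENNReal

noncomputable section

/-- The nonnegative weight `1 + |ξ|² - ξ·∇φ(x)` for `φ(x) = √(1 + |x|²)`. -/
def weight {n : ℕ} (x ξ : EuclideanSpace ℝ (Fin n)) : ℝ :=
  1 + ‖ξ‖ ^ 2 - ⟪ξ, x⟫ / √(1 + ‖x‖ ^ 2)

/-- The quadratic form `ξᵀ D²φ(x) ξ` for `φ(x) = √(1 + |x|²)`. -/
def hessForm {n : ℕ} (x ξ : EuclideanSpace ℝ (Fin n)) : ℝ :=
  ‖ξ‖ ^ 2 / √(1 + ‖x‖ ^ 2) - ⟪ξ, x⟫ ^ 2 / √(1 + ‖x‖ ^ 2) ^ 3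

lemma abs_inner_div_le {n : ℕ} (x ξ : EuclideanSpace ℝ (Fin n)) :
    |⟪ξ, x⟫ / √(1 + ‖x‖ ^ 2)| ≤ ‖ξ‖ := by
  have hs : 0 < √(1 + ‖x‖ ^ 2) := by positivity
  rw [abs_div, abs_of_pos hs, div_le_iff₀ hs]
  refine (abs_real_inner_le_norm ξ x).trans ?_
  gcongr
  exact Real.le_sqrt_of_sq_le (by linarith)

lemma weight_nonneg {n : ℕ} (x ξ : EuclideanSpace ℝ (Fin n)) : 0 ≤ weight x ξ := by
  have h := (abs_le.1 (abs_inner_div_le x ξ)).2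
  unfold weight
  nlinarith [sq_nonneg (‖ξ‖ - 1), sq_nonneg ‖ξ‖]

lemma abs_weight_le {n : ℕ} (x ξ : EuclideanSpace ℝ (Fin n)) : |weight x ξ| ≤ 2 * (1 + ‖ξ‖ ^ 2) := by
  rw [abs_of_nonneg (weight_nonneg x ξ)]
  have h := (abs_le.1 (abs_inner_div_le x ξ)).1
  unfold weight
  nlinarith [sq_nonneg (‖ξ‖ - 1), sq_nonneg ‖ξ‖]

lemma le_hessForm {n : ℕ} (x ξ : EuclideanSpace ℝ (Fin n)) :
    ‖ξ‖ ^ 2 / √(1 + ‖x‖ ^ 2) ^ 3 ≤ hessForm x ξ := by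
  have hs : 0 < √(1 + ‖x‖ ^ 2) := by positivity
  have h2 : √(1 + ‖x‖ ^ 2) ^ 2 = 1 + ‖x‖ ^ 2 := Real.sq_sqrt (by positivity)
  have h1 : ⟪ξ, x⟫ ^ 2 ≤ (‖ξ‖ * ‖x‖) ^ 2 := by
    rw [← sq_abs]
    gcongr
    exact abs_real_inner_le_norm ξ x
  have : hessForm x ξ = (‖ξ‖ ^ 2 * (1 + ‖x‖ ^ 2) - ⟪ξ, x⟫ ^ 2) / √(1 + ‖x‖ ^ 2) ^ 3 := by
    rw [show ‖ξ‖ ^ 2 * (1 + ‖x‖ ^ 2) = ‖ξ‖ ^ 2 * √(1 + ‖x‖ ^ 2) ^ 2 by rw [h2], hessForm]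
    field_simp
  rw [this]
  gcongr
  nlinarith

lemma hessForm_nonneg {n : ℕ} (x ξ : EuclideanSpace ℝ (Fin n)) : 0 ≤ hessForm x ξ :=
  le_trans (by positivity) (le_hessForm x ξ)

lemma continuous_weight {n : ℕ} :
    Continuous fun p : EuclideanSpace ℝ (Fin n) × EuclideanSpace ℝ (Fin n) =>
      weight p.1 p.2 := by
  unfold weight
  refine Continuous.sub (by fun_prop) (Continuous.div (by fun_prop) (by fun_prop) fun p => ?_)
  positivity

lemma continuous_hessForm {n : ℕ} :
    Continuous fun p : EuclideanSpace ℝ (Fin n) × EuclideanSpace ℝ (Fin n) =>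
      hessForm p.1 p.2 := by
  unfold hessForm
  refine Continuous.sub (Continuous.div (by fun_prop) (by fun_prop) fun p => ?_)
    (Continuous.div (by fun_prop) (by fun_prop) fun p => ?_) <;> positivity

/-- The weight decreases along free transport, at the rate `hessForm`. -/
lemma hasDerivAt_weight {n : ℕ} (x ξ : EuclideanSpace ℝ (Fin n)) (s : ℝ) :
    HasDerivAt (fun s : ℝ => weight (x + s • ξ) ξ) (-hessForm (x + s • ξ) ξ) s := by
  have hy : HasDerivAt (fun s : ℝ => x + s • ξ) ξ s := by
    simpa using ((hasDerivAt_id s).smul_const ξ).const_add x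
  have hin : HasDerivAt (fun s : ℝ => ⟪ξ, x + s • ξ⟫) (‖ξ‖ ^ 2) s := by
    simpa using (hasDerivAt_const s ξ).inner ℝ hy
  have hq : HasDerivAt (fun s : ℝ => 1 + ‖x + s • ξ‖ ^ 2) (2 * ⟪x + s • ξ, ξ⟫) s :=
    hy.norm_sq.const_add 1
  have hpos : 0 < √(1 + ‖x + s • ξ‖ ^ 2) := by positivity
  have hsq := hq.sqrt (by positivity)
  have := (hin.div hsq hpos.ne').const_sub (1 + ‖ξ‖ ^ 2)
  refine this.congr_deriv ?_
  rw [real_inner_comm ξ (x + s • ξ), hessForm]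
  field_simp

/-- Integration by parts of an absolutely continuous function against a `C¹` function. -/
lemma integral_parts {T : ℝ} {H γ ψ ψ' : ℝ → ℝ} (hT : 0 ≤ T)
    (hγ : IntervalIntegrable γ volume 0 T)
    (hH : ∀ t ∈ Icc 0 T, H t = H 0 + ∫ s in (0:ℝ)..t, γ s)
    (hψ : ∀ t, HasDerivAt ψ (ψ' t) t) (hψ' : Continuous ψ') :
    ∫ t in (0:ℝ)..T, H t * ψ' t = H T * ψ T - H 0 * ψ 0 - ∫ t in (0:ℝ)..T, γ t * ψ t := by
  have hi : ∀ a b, IntervalIntegrable ψ' volume a b := fun a b => hψ'.intervalIntegrable a b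
  have hψc : Continuous ψ := continuous_iff_continuousAt.2 fun t => (hψ t).continuousAt
  have hB : ∀ t, ∫ s in (0:ℝ)..t, ψ' s = ψ t - ψ 0 := fun t =>
    intervalIntegral.integral_eq_sub_of_hasDerivAt (fun s _ => hψ s) (hi 0 t)
  have hAac := hγ.absolutelyContinuousOnInterval_intervalIntegral (c := 0) (by simp)
  have hBac := (hi 0 T).absolutelyContinuousOnInterval_intervalIntegral (c := 0) (by simp)
  have key := hAac.integral_mul_deriv_eq_deriv_mul hBac
  simp only [hB, deriv_sub_const, (hψ _).deriv, intervalIntegral.integral_same] at key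
  have e1 : ∫ t in (0:ℝ)..T, deriv (fun x => ∫ s in (0:ℝ)..x, γ s) t * (ψ t - ψ 0)
      = ∫ t in (0:ℝ)..T, (γ t * ψ t - γ t * ψ 0) := by
    refine intervalIntegral.integral_congr_ae ?_
    filter_upwards [hγ.ae_hasDerivAt_integral] with t ht htm
    rw [(ht (uIoc_subset_uIcc htm) 0 (by simp)).deriv, mul_sub]
  have e2 : ∫ t in (0:ℝ)..T, H t * ψ' t
      = ∫ t in (0:ℝ)..T, (H 0 * ψ' t + (∫ s in (0:ℝ)..t, γ s) * ψ' t) := by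
    refine intervalIntegral.integral_congr fun t ht => ?_
    rw [uIcc_of_le hT] at ht
    rw [hH t ht]
    ring
  rw [e1, intervalIntegral.integral_sub (hγ.mul_continuousOn hψc.continuousOn)
    (hγ.mul_const _), intervalIntegral.integral_mul_const] at key
  rw [e2, intervalIntegral.integral_add ((hi 0 T).const_mul _)
    ((hi 0 T).continuousOn_mul hAac.continuousOn), intervalIntegral.integral_const_mul, hB, key,
    hH T ⟨hT, le_rfl⟩]
  ring

lemma measurePreserving_shear {n : ℕ} (t : ℝ) :
    MeasurePreserving (fun p : EuclideanSpace ℝ (Fin n) × EuclideanSpace ℝ (Fin n) =>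
      (p.1 + t • p.2, p.2)) := by
  have h : MeasurePreserving (fun p : EuclideanSpace ℝ (Fin n) × EuclideanSpace ℝ (Fin n) =>
      (p.1, p.2 + t • p.1)) (volume.prod volume) (volume.prod volume) :=
    (MeasurePreserving.id volume).skew_product
      (g := fun ξ x => x + t • ξ) (by fun_prop)
      (Eventually.of_forall fun ξ => (measurePreserving_add_right volume (t • ξ)).map_eq)
  exact Measure.measurePreserving_swap.comp (h.comp Measure.measurePreserving_swap)

/-- A mesoscopic interaction has vanishing integral against `weight`, since for fixed `x` the weight
is a combination of `1`, `ξ` and `|ξ|²`; the shear along free transport preserves the measure. -/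
lemma integral_shear_mul_weight_eq_zero {n : ℕ}
    (g : EuclideanSpace ℝ (Fin n) → EuclideanSpace ℝ (Fin n) → ℝ)
    (hg : Measurable fun p : EuclideanSpace ℝ (Fin n) × EuclideanSpace ℝ (Fin n) => g p.1 p.2)
    (hmass : ∀ x, Integrable (fun ξ => g x ξ) ∧ ∫ ξ, g x ξ = 0)
    (hmom : ∀ x, Integrable (fun ξ => g x ξ • ξ) ∧
      ∫ ξ, g x ξ • ξ = (0 : EuclideanSpace ℝ (Fin n)))
    (hen : ∀ x, Integrable (fun ξ => g x ξ * ‖ξ‖ ^ 2) ∧ ∫ ξ, g x ξ * ‖ξ‖ ^ 2 = 0)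
    (s : ℝ)
    (hint : Integrable fun p : EuclideanSpace ℝ (Fin n) × EuclideanSpace ℝ (Fin n) =>
      g (p.1 + s • p.2) p.2 * weight (p.1 + s • p.2) p.2) :
    ∫ p : EuclideanSpace ℝ (Fin n) × EuclideanSpace ℝ (Fin n),
      g (p.1 + s • p.2) p.2 * weight (p.1 + s • p.2) p.2 = 0 := by
  set F : EuclideanSpace ℝ (Fin n) × EuclideanSpace ℝ (Fin n) → ℝ :=
    fun p => g p.1 p.2 * weight p.1 p.2 with hF
  have hFm : AEStronglyMeasurable F volume :=
    (hg.mul continuous_weight.measurable).aestronglyMeasurable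
  have hmp := measurePreserving_shear (n := n) s
  have hFi : Integrable F := (hmp.integrable_comp hFm).1 hint
  have h1 : ∫ p, F p = ∫ p : EuclideanSpace ℝ (Fin n) × EuclideanSpace ℝ (Fin n),
      F (p.1 + s • p.2, p.2) := by
    conv_lhs => rw [← hmp.map_eq]
    exact integral_map hmp.measurable.aemeasurable (by rw [hmp.map_eq]; exact hFm)
  have h2 : ∫ p, F p = 0 := by
    rw [Measure.volume_eq_prod, integral_prod _ (by rwa [← Measure.volume_eq_prod])]
    refine integral_eq_zero_of_ae (Eventually.of_forall fun x => ?_)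
    have e : ∀ ξ, F (x, ξ) = g x ξ + g x ξ * ‖ξ‖ ^ 2
        - (√(1 + ‖x‖ ^ 2))⁻¹ * ⟪x, g x ξ • ξ⟫ := fun ξ => by
      simp only [hF, weight, inner_smul_right, real_inner_comm x ξ]
      ring
    simp only [e, Pi.zero_apply]
    have i3 : Integrable fun ξ => ⟪x, g x ξ • ξ⟫ := (hmom x).1.const_inner x
    have i12 : Integrable fun ξ => g x ξ + g x ξ * ‖ξ‖ ^ 2 := (hmass x).1.add (hen x).1
    rw [integral_sub i12 (i3.const_mul _),
      integral_add (hmass x).1 (hen x).1, integral_const_mul, integral_inner (hmom x).1,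
      (hmass x).2, (hmom x).2, (hen x).2]
    simp
  rw [← h1.symm.trans h2]

/-- The Morawetz-type estimate: the bound does not depend on the time `T`. -/
lemma morawetz_bound {n : ℕ}
    (f g : EuclideanSpace ℝ (Fin n) → EuclideanSpace ℝ (Fin n) → ℝ → ℝ)
    (hf_nonneg : ∀ x ξ t, (0:ℝ) ≤ t → 0 ≤ f x ξ t)
    (hg_meas : Measurable fun p : (EuclideanSpace ℝ (Fin n) × EuclideanSpace ℝ (Fin n)) × ℝ =>
      g p.1.1 p.1.2 p.2)
    (h_mild : ∀ (x ξ : EuclideanSpace ℝ (Fin n)) (t : ℝ), 0 ≤ t →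
      f (x + t • ξ) ξ t = f x ξ 0 + ∫ s in Icc (0:ℝ) t, g (x + s • ξ) ξ s)
    (hmeso_mass : ∀ (t : ℝ), 0 ≤ t → ∀ x, Integrable (fun ξ => g x ξ t) ∧ ∫ ξ, g x ξ t = 0)
    (hmeso_mom : ∀ (t : ℝ), 0 ≤ t → ∀ x, Integrable (fun ξ => g x ξ t • ξ) ∧
      ∫ ξ, g x ξ t • ξ = (0 : EuclideanSpace ℝ (Fin n)))
    (hmeso_en : ∀ (t : ℝ), 0 ≤ t → ∀ x, Integrable (fun ξ => g x ξ t * ‖ξ‖ ^ 2) ∧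
      ∫ ξ, g x ξ t * ‖ξ‖ ^ 2 = 0)
    (hf_int : Integrable (fun p : EuclideanSpace ℝ (Fin n) × EuclideanSpace ℝ (Fin n) =>
        f p.1 p.2 0 * (1 + ‖p.1‖ ^ 2 + ‖p.2‖ ^ 2)))
    (hf_cont : Continuous (fun p : (EuclideanSpace ℝ (Fin n) × EuclideanSpace ℝ (Fin n)) × ℝ =>
      f p.1.1 p.1.2 p.2))
    (T : ℝ) (hT : 0 < T)
    (hg_char_int :
      Integrable (fun q : (EuclideanSpace ℝ (Fin n) × EuclideanSpace ℝ (Fin n)) × ℝ =>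
        |g (q.1.1 + q.2 • q.1.2) q.1.2 q.2| * (1 + ‖q.1.1‖ ^ 2 + ‖q.1.2‖ ^ 2))
        ((volume : Measure (EuclideanSpace ℝ (Fin n) × EuclideanSpace ℝ (Fin n))).prod
          (volume.restrict (Icc (0:ℝ) T)))) :
    ∫⁻ t in Icc (0:ℝ) T, ∫⁻ ξ : EuclideanSpace ℝ (Fin n), ∫⁻ x : EuclideanSpace ℝ (Fin n),
        ENNReal.ofReal (f x ξ t * hessForm x ξ) ≤
      ENNReal.ofReal (∫ p : EuclideanSpace ℝ (Fin n) × EuclideanSpace ℝ (Fin n),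
        f p.1 p.2 0 * weight p.1 p.2) := by
  have hgsm : Measurable fun q : (EuclideanSpace ℝ (Fin n) × EuclideanSpace ℝ (Fin n)) × ℝ =>
      g (q.1.1 + q.2 • q.1.2) q.1.2 q.2 :=
    hg_meas.comp (g := fun p => g p.1.1 p.1.2 p.2)
      (f := fun q : (EuclideanSpace ℝ (Fin n) × EuclideanSpace ℝ (Fin n)) × ℝ =>
        ((q.1.1 + q.2 • q.1.2, q.1.2), q.2)) (by fun_prop)
  have hwc : Continuous fun q : (EuclideanSpace ℝ (Fin n) × EuclideanSpace ℝ (Fin n)) × ℝ =>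
      weight (q.1.1 + q.2 • q.1.2) q.1.2 :=
    continuous_weight.comp (g := fun p => weight p.1 p.2)
      (f := fun q : (EuclideanSpace ℝ (Fin n) × EuclideanSpace ℝ (Fin n)) × ℝ =>
        (q.1.1 + q.2 • q.1.2, q.1.2)) (by fun_prop)
  have hKc : Continuous fun q : (EuclideanSpace ℝ (Fin n) × EuclideanSpace ℝ (Fin n)) × ℝ =>
      hessForm (q.1.1 + q.2 • q.1.2) q.1.2 :=
    continuous_hessForm.comp (g := fun p => hessForm p.1 p.2)
      (f := fun q : (EuclideanSpace ℝ (Fin n) × EuclideanSpace ℝ (Fin n)) × ℝ =>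
        (q.1.1 + q.2 • q.1.2, q.1.2)) (by fun_prop)
  have hfsc : Continuous fun q : (EuclideanSpace ℝ (Fin n) × EuclideanSpace ℝ (Fin n)) × ℝ =>
      f (q.1.1 + q.2 • q.1.2) q.1.2 q.2 :=
    hf_cont.comp (g := fun p => f p.1.1 p.1.2 p.2)
      (f := fun q : (EuclideanSpace ℝ (Fin n) × EuclideanSpace ℝ (Fin n)) × ℝ =>
        ((q.1.1 + q.2 • q.1.2, q.1.2), q.2)) (by fun_prop)
  have hf0c : Continuous fun p : EuclideanSpace ℝ (Fin n) × EuclideanSpace ℝ (Fin n) =>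
      f p.1 p.2 0 :=
    hf_cont.comp (g := fun p => f p.1.1 p.1.2 p.2)
      (f := fun q : (EuclideanSpace ℝ (Fin n) × EuclideanSpace ℝ (Fin n)) => (q, (0:ℝ)))
      (by fun_prop)
  have hgi : Integrable (fun q : (EuclideanSpace ℝ (Fin n) × EuclideanSpace ℝ (Fin n)) × ℝ =>
      g (q.1.1 + q.2 • q.1.2) q.1.2 q.2) (volume.prod (volume.restrict (Icc (0:ℝ) T))) := by
    refine hg_char_int.mono' hgsm.aestronglyMeasurable (Eventually.of_forall fun q => ?_)
    rw [Real.norm_eq_abs]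
    exact le_mul_of_one_le_right (abs_nonneg _)
      (by nlinarith [sq_nonneg ‖q.1.1‖, sq_nonneg ‖q.1.2‖])
  have hGi : Integrable (fun q : (EuclideanSpace ℝ (Fin n) × EuclideanSpace ℝ (Fin n)) × ℝ =>
      g (q.1.1 + q.2 • q.1.2) q.1.2 q.2 * weight (q.1.1 + q.2 • q.1.2) q.1.2)
      (volume.prod (volume.restrict (Icc (0:ℝ) T))) := by
    refine (hg_char_int.const_mul 2).mono' (hgsm.mul hwc.measurable).aestronglyMeasurable
      (Eventually.of_forall fun q => ?_)
    rw [norm_mul, Real.norm_eq_abs, Real.norm_eq_abs]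
    have h1 := abs_weight_le (q.1.1 + q.2 • q.1.2) q.1.2
    have h2 := abs_nonneg (g (q.1.1 + q.2 • q.1.2) q.1.2 q.2)
    calc _ ≤ |g (q.1.1 + q.2 • q.1.2) q.1.2 q.2| * (2 * (1 + ‖q.1.1‖ ^ 2 + ‖q.1.2‖ ^ 2)) := by
          gcongr
          nlinarith [sq_nonneg ‖q.1.1‖]
      _ = _ := by ring
  have hG0 : ∫ p : EuclideanSpace ℝ (Fin n) × EuclideanSpace ℝ (Fin n), ∫ s in Icc (0:ℝ) T,
      g (p.1 + s • p.2) p.2 s * weight (p.1 + s • p.2) p.2 = 0 := by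
    rw [integral_integral_swap hGi]
    refine integral_eq_zero_of_ae ?_
    filter_upwards [hGi.prod_left_ae, ae_restrict_mem measurableSet_Icc] with s hs hsT
    refine integral_shear_mul_weight_eq_zero (fun x ξ => g x ξ s) ?_ (hmeso_mass s hsT.1)
      (hmeso_mom s hsT.1) (hmeso_en s hsT.1) s hs
    exact hg_meas.comp (g := fun p => g p.1.1 p.1.2 p.2)
      (f := fun q : (EuclideanSpace ℝ (Fin n) × EuclideanSpace ℝ (Fin n)) => (q, s)) (by fun_prop)
  have hf0i : Integrable fun p : EuclideanSpace ℝ (Fin n) × EuclideanSpace ℝ (Fin n) =>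
      f p.1 p.2 0 * weight p.1 p.2 := by
    refine (hf_int.const_mul 2).mono' (hf0c.mul continuous_weight).aestronglyMeasurable
      (Eventually.of_forall fun p => ?_)
    have h2 := hf_nonneg p.1 p.2 0 le_rfl
    rw [norm_mul, Real.norm_eq_abs, Real.norm_eq_abs, abs_of_nonneg h2]
    have h1 := abs_weight_le p.1 p.2
    calc _ ≤ f p.1 p.2 0 * (2 * (1 + ‖p.1‖ ^ 2 + ‖p.2‖ ^ 2)) := by
          gcongr
          nlinarith [sq_nonneg ‖p.1‖]
      _ = _ := by ring
  -- integration by parts along the characteristic, dropping the nonnegative term at time `T`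
  have hpt : ∀ᵐ p : EuclideanSpace ℝ (Fin n) × EuclideanSpace ℝ (Fin n),
      ∫ s in Icc (0:ℝ) T, f (p.1 + s • p.2) p.2 s * hessForm (p.1 + s • p.2) p.2 ≤
        f p.1 p.2 0 * weight p.1 p.2 + ∫ s in Icc (0:ℝ) T,
          g (p.1 + s • p.2) p.2 s * weight (p.1 + s • p.2) p.2 := by
    filter_upwards [hgi.prod_right_ae] with p hp
    have hparts := integral_parts (H := fun t => f (p.1 + t • p.2) p.2 t)
      (γ := fun s => g (p.1 + s • p.2) p.2 s) (ψ := fun s => weight (p.1 + s • p.2) p.2)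
      (ψ' := fun s => -hessForm (p.1 + s • p.2) p.2) hT.le
      ((intervalIntegrable_iff_integrableOn_Icc_of_le hT.le).2 hp)
      (fun t ht => by
        rw [intervalIntegral.integral_of_le ht.1, ← integral_Icc_eq_integral_Ioc]
        simpa using h_mild p.1 p.2 t ht.1)
      (fun t => hasDerivAt_weight p.1 p.2 t)
      (hKc.comp (f := fun s : ℝ => (p, s)) (by fun_prop)).neg
    simp only [intervalIntegral.integral_of_le hT.le, ← integral_Icc_eq_integral_Ioc, mul_neg,
      integral_neg, zero_smul, add_zero] at hparts
    have := mul_nonneg (hf_nonneg (p.1 + T • p.2) p.2 T hT.le)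
      (weight_nonneg (p.1 + T • p.2) p.2)
    linarith
  have hnn : ∀ p : EuclideanSpace ℝ (Fin n) × EuclideanSpace ℝ (Fin n),
      0 ≤ᵐ[volume.restrict (Icc (0:ℝ) T)] fun s =>
        f (p.1 + s • p.2) p.2 s * hessForm (p.1 + s • p.2) p.2 := fun p => by
    filter_upwards [ae_restrict_mem measurableSet_Icc] with s hs
    exact mul_nonneg (hf_nonneg _ _ _ hs.1) (hessForm_nonneg _ _)
  have hFm : Measurable fun q : (EuclideanSpace ℝ (Fin n) × EuclideanSpace ℝ (Fin n)) × ℝ =>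
      ENNReal.ofReal (f q.1.1 q.1.2 q.2 * hessForm q.1.1 q.1.2) :=
    (hf_cont.mul (continuous_hessForm.comp continuous_fst)).measurable.ennreal_ofReal
  calc ∫⁻ t in Icc (0:ℝ) T, ∫⁻ ξ : EuclideanSpace ℝ (Fin n), ∫⁻ x : EuclideanSpace ℝ (Fin n),
        ENNReal.ofReal (f x ξ t * hessForm x ξ)
      = ∫⁻ t in Icc (0:ℝ) T, ∫⁻ p : EuclideanSpace ℝ (Fin n) × EuclideanSpace ℝ (Fin n),
        ENNReal.ofReal (f (p.1 + t • p.2) p.2 t * hessForm (p.1 + t • p.2) p.2) := by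
        refine lintegral_congr fun t => ?_
        have hm : Measurable fun p : EuclideanSpace ℝ (Fin n) × EuclideanSpace ℝ (Fin n) =>
            ENNReal.ofReal (f p.1 p.2 t * hessForm p.1 p.2) :=
          hFm.comp (f := fun p => (p, t)) (by fun_prop)
        rw [(measurePreserving_shear t).lintegral_comp hm, Measure.volume_eq_prod,
          lintegral_prod_symm _ hm.aemeasurable]
    _ = ∫⁻ p : EuclideanSpace ℝ (Fin n) × EuclideanSpace ℝ (Fin n), ∫⁻ t in Icc (0:ℝ) T,
        ENNReal.ofReal (f (p.1 + t • p.2) p.2 t * hessForm (p.1 + t • p.2) p.2) := by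
        refine (lintegral_lintegral_swap ?_).symm
        exact (hfsc.mul hKc).measurable.ennreal_ofReal.aemeasurable
    _ = ∫⁻ p : EuclideanSpace ℝ (Fin n) × EuclideanSpace ℝ (Fin n), ENNReal.ofReal
        (∫ t in Icc (0:ℝ) T, f (p.1 + t • p.2) p.2 t * hessForm (p.1 + t • p.2) p.2) := by
        refine lintegral_congr fun p => (ofReal_integral_eq_lintegral_ofReal ?_ (hnn p)).symm
        exact (((hfsc.mul hKc).comp (f := fun s : ℝ => (p, s))
          (by fun_prop)).continuousOn).integrableOn_Icc
    _ ≤ ∫⁻ p : EuclideanSpace ℝ (Fin n) × EuclideanSpace ℝ (Fin n), ENNReal.ofReal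
        (f p.1 p.2 0 * weight p.1 p.2 + ∫ s in Icc (0:ℝ) T,
          g (p.1 + s • p.2) p.2 s * weight (p.1 + s • p.2) p.2) := by
        refine lintegral_mono_ae ?_
        filter_upwards [hpt] with p hp using ENNReal.ofReal_le_ofReal hp
    _ = _ := by
        have hGi' : Integrable fun p : EuclideanSpace ℝ (Fin n) × EuclideanSpace ℝ (Fin n) =>
            ∫ s in Icc (0:ℝ) T, g (p.1 + s • p.2) p.2 s * weight (p.1 + s • p.2) p.2 :=
          hGi.integral_prod_left
        have hsum : Integrable fun p : EuclideanSpace ℝ (Fin n) × EuclideanSpace ℝ (Fin n) =>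
            f p.1 p.2 0 * weight p.1 p.2 + ∫ s in Icc (0:ℝ) T,
              g (p.1 + s • p.2) p.2 s * weight (p.1 + s • p.2) p.2 := hf0i.add hGi'
        rw [← ofReal_integral_eq_lintegral_ofReal hsum, integral_add hf0i hGi', hG0, add_zero]
        filter_upwards [hpt] with p hp using (integral_nonneg_of_ae (hnn p)).trans hp

/-- The total energy contained in any bounded spatial set `D` is
integrable over time: `∫₀^∞ ∫_{ℝⁿ} ∫_D f(x,ξ,t)|ξ|² dx dξ dt < ∞`. -/
theorem energy_in_bounded_set_time_integrable {n : ℕ} (hn : 2 ≤ n)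
    (f g : EuclideanSpace ℝ (Fin n) → EuclideanSpace ℝ (Fin n) → ℝ → ℝ)
    (hf_nonneg : ∀ x ξ t, (0:ℝ) ≤ t → 0 ≤ f x ξ t)
    (hf_meas : Measurable fun p : (EuclideanSpace ℝ (Fin n) × EuclideanSpace ℝ (Fin n)) × ℝ =>
      f p.1.1 p.1.2 p.2)
    (hg_meas : Measurable fun p : (EuclideanSpace ℝ (Fin n) × EuclideanSpace ℝ (Fin n)) × ℝ =>
      g p.1.1 p.1.2 p.2)
    -- mild solution along characteristics
    (h_mild : ∀ (x ξ : EuclideanSpace ℝ (Fin n)) (t : ℝ), 0 ≤ t →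
      f (x + t • ξ) ξ t = f x ξ 0 + ∫ s in Icc (0:ℝ) t, g (x + s • ξ) ξ s)
    -- `g` is a mesoscopic interaction
    (hmeso_mass : ∀ (t : ℝ), 0 ≤ t → ∀ x, Integrable (fun ξ => g x ξ t) ∧ ∫ ξ, g x ξ t = 0)
    (hmeso_mom : ∀ (t : ℝ), 0 ≤ t → ∀ x, Integrable (fun ξ => g x ξ t • ξ) ∧
      ∫ ξ, g x ξ t • ξ = (0 : EuclideanSpace ℝ (Fin n)))
    (hmeso_en : ∀ (t : ℝ), 0 ≤ t → ∀ x, Integrable (fun ξ => g x ξ t * ‖ξ‖ ^ 2) ∧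
      ∫ ξ, g x ξ t * ‖ξ‖ ^ 2 = 0)
    -- finiteness of mass, energy and second moments at every time
    (hf_int : ∀ (t : ℝ), 0 ≤ t →
      Integrable (fun p : EuclideanSpace ℝ (Fin n) × EuclideanSpace ℝ (Fin n) =>
        f p.1 p.2 t * (1 + ‖p.1‖ ^ 2 + ‖p.2‖ ^ 2)))
    -- integrability of the interaction along characteristics with second moments
    (hg_char_int : ∀ T : ℝ, 0 < T →
      Integrable (fun q : (EuclideanSpace ℝ (Fin n) × EuclideanSpace ℝ (Fin n)) × ℝ =>
        |g (q.1.1 + q.2 • q.1.2) q.1.2 q.2| * (1 + ‖q.1.1‖ ^ 2 + ‖q.1.2‖ ^ 2))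
        ((volume : Measure (EuclideanSpace ℝ (Fin n) × EuclideanSpace ℝ (Fin n))).prod
          (volume.restrict (Icc (0:ℝ) T))))
    -- the total energy
    (Energy : ℝ)
    (hE : Energy = ∫ p : EuclideanSpace ℝ (Fin n) × EuclideanSpace ℝ (Fin n),
      f p.1 p.2 0 * ‖p.2‖ ^ 2)
    -- `f` is smooth enough for the integration by parts in the spatial variable
    (hf_smooth : ContDiff ℝ 1 (fun p : (EuclideanSpace ℝ (Fin n) × EuclideanSpace ℝ (Fin n)) × ℝ =>
      f p.1.1 p.1.2 p.2))
    :
    ∀ D : Set (EuclideanSpace ℝ (Fin n)), Bornology.IsBounded D →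
      ∫⁻ t in Ioi (0:ℝ), ∫⁻ ξ : EuclideanSpace ℝ (Fin n), ∫⁻ x in D,
        ENNReal.ofReal (f x ξ t * ‖ξ‖ ^ 2) < ⊤ := by
  intro D hD
  obtain ⟨R, hR⟩ := hD.subset_closedBall 0
  set C : ℝ := √(1 + R ^ 2) ^ 3 with hC
  have hC0 : 0 ≤ C := by positivity
  set B : ℝ := ∫ p : EuclideanSpace ℝ (Fin n) × EuclideanSpace ℝ (Fin n),
    f p.1 p.2 0 * weight p.1 p.2
  set Φ : ℝ → ℝ≥0∞ := fun t => ∫⁻ ξ : EuclideanSpace ℝ (Fin n),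
    ∫⁻ x : EuclideanSpace ℝ (Fin n), ENNReal.ofReal (f x ξ t * hessForm x ξ)
  have hΦ : ∫⁻ t in Ioi (0:ℝ), Φ t ≤ ENNReal.ofReal B := by
    have hsub : Ioi (0:ℝ) ⊆ ⋃ N : ℕ, Icc (0:ℝ) (N + 1) := fun t ht => by
      obtain ⟨N, hN⟩ := exists_nat_ge t
      exact mem_iUnion.2 ⟨N, (mem_Ioi.1 ht).le, by linarith⟩
    refine (lintegral_mono_set hsub).trans ?_
    rw [setLIntegral_iUnion_of_directed]
    · refine iSup_le fun N => ?_
      have hN : (0:ℝ) < N + 1 := by positivity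
      exact morawetz_bound f g hf_nonneg hg_meas h_mild hmeso_mass hmeso_mom hmeso_en
        (hf_int 0 le_rfl) hf_smooth.continuous _ hN (hg_char_int _ hN)
    · refine Monotone.directed_le fun a b hab => Icc_subset_Icc_right ?_
      have : (a:ℝ) ≤ b := by exact_mod_cast hab
      linarith
  have hpt : ∀ t ∈ Ioi (0:ℝ), ∫⁻ ξ : EuclideanSpace ℝ (Fin n), ∫⁻ x in D,
      ENNReal.ofReal (f x ξ t * ‖ξ‖ ^ 2) ≤ ENNReal.ofReal C * Φ t := by
    intro t ht
    rw [← lintegral_const_mul' _ _ ENNReal.ofReal_ne_top]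
    refine lintegral_mono fun ξ => ?_
    rw [← lintegral_const_mul' _ _ ENNReal.ofReal_ne_top]
    -- `D` need not be measurable, so it is enlarged to a ball before the pointwise comparison
    refine (lintegral_mono_set hR).trans ((setLIntegral_mono' measurableSet_closedBall
      fun x hx => ?_).trans (setLIntegral_le_lintegral _ _))
    rw [← ENNReal.ofReal_mul hC0]
    refine ENNReal.ofReal_le_ofReal ?_
    have hx' : ‖x‖ ≤ R := by simpa using hx
    have h1 := le_hessForm x ξ
    rw [div_le_iff₀ (by positivity)] at h1
    have h2 : √(1 + ‖x‖ ^ 2) ^ 3 ≤ C := by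
      rw [hC]
      gcongr
    have h3 : ‖ξ‖ ^ 2 ≤ hessForm x ξ * C :=
      h1.trans (mul_le_mul_of_nonneg_left h2 (hessForm_nonneg x ξ))
    calc f x ξ t * ‖ξ‖ ^ 2 ≤ f x ξ t * (hessForm x ξ * C) :=
          mul_le_mul_of_nonneg_left h3 (hf_nonneg x ξ t (mem_Ioi.1 ht).le)
      _ = C * (f x ξ t * hessForm x ξ) := by ring
  calc _ ≤ ∫⁻ t in Ioi (0:ℝ), ENNReal.ofReal C * Φ t := setLIntegral_mono' measurableSet_Ioi hpt
    _ = ENNReal.ofReal C * ∫⁻ t in Ioi (0:ℝ), Φ t :=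
        lintegral_const_mul' _ _ ENNReal.ofReal_ne_top
    _ ≤ ENNReal.ofReal C * ENNReal.ofReal B := by gcongr
    _ < ⊤ := ENNReal.mul_lt_top ENNReal.ofReal_lt_top ENNReal.ofReal_lt_top
end
end

section
/- For every bounded subset D ⊆ ℝⁿ and every v > 0, the total mass of particles in D with speed at least v is integrable over time: ∫₀^∞ ∫_{{ξ ∈ ℝⁿ : |ξ| ≥ v}} ∫_D f(x,ξ,t) dx dξ dt < ∞. -/
/-!
The proof is a Morawetz estimate carried out along characteristics, with the multiplier
`φ(x, ξ) = ⟪ξ, x⟫ / √(1 + ‖x‖²)`, which satisfies `|φ| ≤ ‖ξ‖ ≤ 1 + ‖ξ‖²`. Its derivative along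
free transport is `ψ(x, ξ) = ‖ξ‖² / w - ⟪ξ, x⟫² / w³` with `w = √(1 + ‖x‖²)`, and Cauchy–Schwarz
gives `ψ ≥ ‖ξ‖² / w³ ≥ 0`.

On almost every characteristic, integrating `(d/ds) [f φ] = g φ + f ψ` over `[0, T]` expresses
`∫₀ᵀ f ψ` through the boundary values of `f φ` and `∫₀ᵀ g φ` (`integral_along_characteristic`).
After integration over phase space the `g φ` term disappears, because `φ` is linear in `ξ` and `g`
has no momentum (`integral_interaction_eq_zero`); the same lemma with the weight `1 + ‖ξ‖²` shows
that mass plus energy is conserved (`integral_moment_eq`), which bounds the boundary terms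
uniformly in `T`. Hence `∫₀^∞ ∬ f ψ` is finite (`lintegral_flux_le`), and on a bounded set of
positions and for speeds at least `v` the weight `ψ` is bounded below by a positive constant.
-/


open MeasureTheory Real Filter Set
open scoped RealInnerProductSpace ENNReal

noncomputable section

section Helpers

variable {E : Type*} [NormedAddCommGroup E] [InnerProductSpace ℝ E]

/-! ### The Morawetz multiplier -/

/-- The Morawetz multiplier `⟪ξ, x⟫ / √(1 + ‖x‖²)`. -/
def morawetz (x ξ : E) : ℝ := ⟪ξ, x⟫ / √(1 + ‖x‖ ^ 2)

/-- The derivative of the Morawetz multiplier along free transport. -/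
def morawetzFlux (x ξ : E) : ℝ :=
  ‖ξ‖ ^ 2 / √(1 + ‖x‖ ^ 2) - ⟪ξ, x⟫ ^ 2 / √(1 + ‖x‖ ^ 2) ^ 3

lemma sqrt_one_add_pos {E : Type*} [NormedAddCommGroup E] (x : E) : 0 < √(1 + ‖x‖ ^ 2) := by positivity

lemma continuous_morawetz : Continuous fun p : E × E => morawetz p.1 p.2 := by
  unfold morawetz
  exact Continuous.div (by fun_prop) (by fun_prop) fun p => (sqrt_one_add_pos p.1).ne'

lemma continuous_morawetzFlux : Continuous fun p : E × E => morawetzFlux p.1 p.2 := by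
  unfold morawetzFlux
  refine Continuous.sub (Continuous.div (by fun_prop) (by fun_prop) fun p => ?_)
    (Continuous.div (by fun_prop) (by fun_prop) fun p => ?_)
  · exact (sqrt_one_add_pos p.1).ne'
  · exact pow_ne_zero _ (sqrt_one_add_pos p.1).ne'

lemma abs_morawetz_le (x ξ : E) : |morawetz x ξ| ≤ 1 + ‖ξ‖ ^ 2 := by
  have hw := sqrt_one_add_pos x
  have hx : ‖x‖ ≤ √(1 + ‖x‖ ^ 2) := Real.le_sqrt_of_sq_le (by linarith)
  have h1 : |morawetz x ξ| ≤ ‖ξ‖ := by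
    rw [morawetz, abs_div, abs_of_pos hw, div_le_iff₀ hw]
    exact (abs_real_inner_le_norm ξ x).trans (by gcongr)
  nlinarith [sq_nonneg (‖ξ‖ - 1), sq_nonneg ‖ξ‖]

lemma morawetzFlux_ge (x ξ : E) : ‖ξ‖ ^ 2 / √(1 + ‖x‖ ^ 2) ^ 3 ≤ morawetzFlux x ξ := by
  have hw := sqrt_one_add_pos x
  have hw2 : √(1 + ‖x‖ ^ 2) ^ 2 = 1 + ‖x‖ ^ 2 := Real.sq_sqrt (by positivity)
  have hcs : ⟪ξ, x⟫ ^ 2 ≤ ‖ξ‖ ^ 2 * ‖x‖ ^ 2 := by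
    rw [← mul_pow, ← sq_abs]
    gcongr
    exact abs_real_inner_le_norm ξ x
  have h : ‖ξ‖ ^ 2 / √(1 + ‖x‖ ^ 2) = ‖ξ‖ ^ 2 * (1 + ‖x‖ ^ 2) / √(1 + ‖x‖ ^ 2) ^ 3 := by
    field_simp
    rw [hw2]
  rw [morawetzFlux, h, ← sub_div]
  gcongr
  linarith

lemma morawetzFlux_nonneg (x ξ : E) : 0 ≤ morawetzFlux x ξ :=
  le_trans (by positivity) (morawetzFlux_ge x ξ)

lemma hasDerivAt_morawetz (x ξ : E) (s : ℝ) :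
    HasDerivAt (fun s : ℝ => morawetz (x + s • ξ) ξ) (morawetzFlux (x + s • ξ) ξ) s := by
  have hy : HasDerivAt (fun s : ℝ => x + s • ξ) ξ s := by
    simpa using ((hasDerivAt_id s).smul_const ξ).const_add x
  have hw := sqrt_one_add_pos (x + s • ξ)
  have hin : HasDerivAt (fun s : ℝ => ⟪ξ, x + s • ξ⟫) (‖ξ‖ ^ 2) s := by
    simpa using (hasDerivAt_const s ξ).inner ℝ hy
  have hsq : HasDerivAt (fun s : ℝ => 1 + ‖x + s • ξ‖ ^ 2) (2 * ⟪x + s • ξ, ξ⟫) s :=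
    hy.norm_sq.const_add 1
  have hd := hin.div (hsq.sqrt (by positivity)) hw.ne'
  refine hd.congr_deriv ?_
  rw [morawetzFlux, real_inner_comm ξ (x + s • ξ)]
  field_simp

/-! ### The product rule along a characteristic -/

/-- Product rule along a characteristic: `F` is the density, whose increments are the integrals of
the interaction `G`, and `φ` is the multiplier. -/
lemma integral_along_characteristic {F G φ φ' : ℝ → ℝ} {T : ℝ} (hT : 0 < T)
    (hF : ContDiff ℝ 1 F) (hφ : ∀ s, HasDerivAt φ (φ' s) s) (hφ' : Continuous φ')
    (hG : IntegrableOn G (Icc 0 T)) (hFG : ∀ t, 0 ≤ t → F t = F 0 + ∫ s in Icc 0 t, G s) :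
    ∫ s in Icc 0 T, F s * φ' s
      = F T * φ T - F 0 * φ 0 - ∫ s in Icc 0 T, G s * φ s := by
  have hFd : ∀ s, HasDerivAt F (deriv F s) s := fun s =>
    (hF.differentiable (by norm_num) s).hasDerivAt
  have hFc : Continuous (deriv F) := hF.continuous_deriv (by norm_num)
  have hGi : IntervalIntegrable G volume 0 T :=
    (intervalIntegrable_iff_integrableOn_Icc_of_le hT.le).2 hG
  -- Lebesgue differentiation identifies `G` with the classical derivative of `F`.
  have hae : ∀ᵐ s, s ∈ Ioo 0 T → deriv F s = G s := by
    filter_upwards [hGi.ae_hasDerivAt_integral] with s hs hsT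
    have hsI : s ∈ uIcc 0 T := by rw [uIcc_of_le hT.le]; exact Ioo_subset_Icc_self hsT
    have h1 := (hs hsI 0 (by simp)).const_add (F 0)
    have h2 : HasDerivAt F (G s) s := by
      refine h1.congr_of_eventuallyEq ?_
      filter_upwards [Ioo_mem_nhds hsT.1 hsT.2] with t ht
      rw [hFG t ht.1.le, intervalIntegral.integral_of_le ht.1.le, integral_Icc_eq_integral_Ioc]
    exact h2.deriv
  have hparts := intervalIntegral.integral_mul_deriv_eq_deriv_mul (a := 0) (b := T)
    (fun s _ => hFd s) (fun s _ => hφ s) (hFc.intervalIntegrable _ _)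
    (hφ'.intervalIntegrable _ _)
  rw [intervalIntegral.integral_of_le hT.le, intervalIntegral.integral_of_le hT.le] at hparts
  rw [integral_Icc_eq_integral_Ioc, hparts, integral_Icc_eq_integral_Ioo,
    integral_Ioc_eq_integral_Ioo]
  congr 1
  refine setIntegral_congr_ae measurableSet_Ioo ?_
  filter_upwards [hae] with s hs hsT
  rw [hs hsT]

/-! ### Free transport on phase space and vanishing moments -/

variable [FiniteDimensional ℝ E] [MeasurableSpace E] [BorelSpace E]

lemma measurePreserving_transport (s : ℝ) :
    MeasurePreserving (fun p : E × E => (p.1 + s • p.2, p.2)) := by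
  have h : MeasurePreserving (fun p : E × E => (p.1, p.2 + s • p.1))
      (volume.prod volume) (volume.prod volume) := by
    refine (MeasurePreserving.id volume).skew_product (g := fun ξ x => x + s • ξ) ?_ ?_
    · exact Continuous.measurable (by fun_prop)
    · exact Eventually.of_forall fun ξ => map_add_right_eq_self _ _
  exact (Measure.measurePreserving_swap.comp h).comp Measure.measurePreserving_swap

lemma measurableEmbedding_transport (s : ℝ) :
    MeasurableEmbedding (fun p : E × E => (p.1 + s • p.2, p.2)) := by
  refine Measurable.measurableEmbedding (Continuous.measurable (by fun_prop)) ?_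
  rintro ⟨x, ξ⟩ ⟨y, η⟩ h
  simp only [Prod.mk.injEq] at h
  obtain ⟨h1, rfl⟩ := h
  simpa using h1

lemma measurable_transport :
    Measurable fun q : (E × E) × ℝ => ((q.1.1 + q.2 • q.1.2, q.1.2), q.2) :=
  Continuous.measurable (by fun_prop)

lemma integrable_interaction {g : E → E → ℝ → ℝ} {k : E → E → ℝ} {T : ℝ}
    (hg_meas : Measurable fun p : (E × E) × ℝ => g p.1.1 p.1.2 p.2)
    (hg_int : Integrable (fun q : (E × E) × ℝ =>
        |g (q.1.1 + q.2 • q.1.2) q.1.2 q.2| * (1 + ‖q.1.1‖ ^ 2 + ‖q.1.2‖ ^ 2))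
        ((volume : Measure (E × E)).prod (volume.restrict (Icc (0:ℝ) T))))
    (hk : Continuous fun p : E × E => k p.1 p.2) (hkb : ∀ x ξ, |k x ξ| ≤ 1 + ‖ξ‖ ^ 2) :
    Integrable (fun q : (E × E) × ℝ =>
        g (q.1.1 + q.2 • q.1.2) q.1.2 q.2 * k (q.1.1 + q.2 • q.1.2) q.1.2)
        ((volume : Measure (E × E)).prod (volume.restrict (Icc (0:ℝ) T))) := by
  refine hg_int.mono' ?_ (Eventually.of_forall fun q => ?_)
  · have hkm : Measurable fun p : (E × E) × ℝ => k p.1.1 p.1.2 := hk.measurable.comp measurable_fst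
    exact ((hg_meas.comp measurable_transport).mul
      (hkm.comp measurable_transport)).aestronglyMeasurable
  · rw [Real.norm_eq_abs, abs_mul]
    gcongr
    exact (hkb _ _).trans (by nlinarith [sq_nonneg ‖q.1.1‖])

/-- The interaction does not contribute to a moment `k` that it annihilates at every position. -/
lemma integral_interaction_eq_zero {g : E → E → ℝ → ℝ} {k : E → E → ℝ} {T : ℝ}
    (hg : Integrable (fun q : (E × E) × ℝ =>
        g (q.1.1 + q.2 • q.1.2) q.1.2 q.2 * k (q.1.1 + q.2 • q.1.2) q.1.2)
        ((volume : Measure (E × E)).prod (volume.restrict (Icc (0:ℝ) T))))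
    (h0 : ∀ t, 0 ≤ t → ∀ x, ∫ ξ, g x ξ t * k x ξ = 0) :
    ∫ p : E × E, ∫ s in Icc (0:ℝ) T, g (p.1 + s • p.2) p.2 s * k (p.1 + s • p.2) p.2 = 0 := by
  rw [integral_integral_swap (f := fun (p : E × E) (s : ℝ) =>
    g (p.1 + s • p.2) p.2 s * k (p.1 + s • p.2) p.2) hg]
  refine setIntegral_eq_zero_of_forall_eq_zero fun s hs => ?_
  rw [(measurePreserving_transport s).integral_comp (measurableEmbedding_transport s)
    (fun p : E × E => g p.1 p.2 s * k p.1 p.2)]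
  by_cases hi : Integrable (fun p : E × E => g p.1 p.2 s * k p.1 p.2)
  · rw [Measure.volume_eq_prod] at hi ⊢
    rw [integral_prod _ hi]
    simp [h0 s hs.1]
  · exact integral_undef hi

lemma integrable_moment {h : E → E → ℝ} {k : E → E → ℝ}
    (hm : Measurable fun p : E × E => h p.1 p.2) (h_nonneg : ∀ x ξ, 0 ≤ h x ξ)
    (h_int : Integrable fun p : E × E => h p.1 p.2 * (1 + ‖p.1‖ ^ 2 + ‖p.2‖ ^ 2))
    (hk : Continuous fun p : E × E => k p.1 p.2) (hkb : ∀ x ξ, |k x ξ| ≤ 1 + ‖ξ‖ ^ 2) :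
    Integrable fun p : E × E => h p.1 p.2 * k p.1 p.2 := by
  refine h_int.mono' (hm.mul hk.measurable).aestronglyMeasurable (Eventually.of_forall fun p => ?_)
  rw [Real.norm_eq_abs, abs_mul, abs_of_nonneg (h_nonneg _ _)]
  gcongr
  · exact h_nonneg _ _
  · exact (hkb _ _).trans (by nlinarith [sq_nonneg ‖p.1‖])

/-- Conservation of mass plus energy. -/
lemma integral_moment_eq {f g : E → E → ℝ → ℝ} {T : ℝ} (hT : 0 < T)
    (h_mild : ∀ (x ξ : E) (t : ℝ), 0 ≤ t →
      f (x + t • ξ) ξ t = f x ξ 0 + ∫ s in Icc (0:ℝ) t, g (x + s • ξ) ξ s)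
    (hg : Integrable (fun q : (E × E) × ℝ =>
        g (q.1.1 + q.2 • q.1.2) q.1.2 q.2 * (1 + ‖q.1.2‖ ^ 2))
        ((volume : Measure (E × E)).prod (volume.restrict (Icc (0:ℝ) T))))
    (h0 : ∀ t, 0 ≤ t → ∀ x, ∫ ξ, g x ξ t * (1 + ‖ξ‖ ^ 2) = 0)
    (hf0 : Integrable fun p : E × E => f p.1 p.2 0 * (1 + ‖p.2‖ ^ 2)) :
    ∫ p : E × E, f p.1 p.2 T * (1 + ‖p.2‖ ^ 2) = ∫ p : E × E, f p.1 p.2 0 * (1 + ‖p.2‖ ^ 2) := by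
  rw [← (measurePreserving_transport T).integral_comp (measurableEmbedding_transport T)
    (fun p : E × E => f p.1 p.2 T * (1 + ‖p.2‖ ^ 2))]
  simp only [h_mild _ _ T hT.le, add_mul _ _ (1 + ‖_‖ ^ 2), ← integral_mul_const]
  rw [integral_add hf0 hg.integral_prod_left,
    integral_interaction_eq_zero (k := fun _ ξ => 1 + ‖ξ‖ ^ 2) hg h0, add_zero]

/-! ### The Morawetz estimate -/

/-- The Morawetz estimate on `[0, T]`, with a bound independent of `T`. -/
lemma lintegral_flux_le {f g : E → E → ℝ → ℝ} {T : ℝ} (hT : 0 < T)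
    (hf_nonneg : ∀ x ξ t, (0:ℝ) ≤ t → 0 ≤ f x ξ t)
    (hg_meas : Measurable fun p : (E × E) × ℝ => g p.1.1 p.1.2 p.2)
    (h_mild : ∀ (x ξ : E) (t : ℝ), 0 ≤ t →
      f (x + t • ξ) ξ t = f x ξ 0 + ∫ s in Icc (0:ℝ) t, g (x + s • ξ) ξ s)
    (h_moment : ∀ t, 0 ≤ t → ∀ x, ∫ ξ, g x ξ t * (1 + ‖ξ‖ ^ 2) = 0)
    (h_morawetz : ∀ t, 0 ≤ t → ∀ x, ∫ ξ, g x ξ t * morawetz x ξ = 0)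
    (hf_int : ∀ t : ℝ, 0 ≤ t →
      Integrable fun p : E × E => f p.1 p.2 t * (1 + ‖p.1‖ ^ 2 + ‖p.2‖ ^ 2))
    (hg_int : Integrable (fun q : (E × E) × ℝ =>
        |g (q.1.1 + q.2 • q.1.2) q.1.2 q.2| * (1 + ‖q.1.1‖ ^ 2 + ‖q.1.2‖ ^ 2))
        ((volume : Measure (E × E)).prod (volume.restrict (Icc (0:ℝ) T))))
    (hf_smooth : ContDiff ℝ 1 fun p : (E × E) × ℝ => f p.1.1 p.1.2 p.2) :
    ∫⁻ t in Icc 0 T, ∫⁻ p : E × E, ENNReal.ofReal (f p.1 p.2 t * morawetzFlux p.1 p.2)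
      ≤ ENNReal.ofReal (2 * ∫ p : E × E, f p.1 p.2 0 * (1 + ‖p.2‖ ^ 2)) := by
  have hwc : Continuous fun p : E × E => 1 + ‖p.2‖ ^ 2 := by fun_prop
  have hwb : ∀ x ξ : E, |1 + ‖ξ‖ ^ 2| ≤ 1 + ‖ξ‖ ^ 2 := fun _ ξ => by
    rw [abs_of_nonneg (by positivity)]
  have hft : ∀ t, Measurable fun p : E × E => f p.1 p.2 t := fun t =>
    (hf_smooth.continuous.comp (by fun_prop : Continuous fun p : E × E => (p, t))).measurable
  have hfw : ∀ t, 0 ≤ t → Integrable fun p : E × E => f p.1 p.2 t * (1 + ‖p.2‖ ^ 2) :=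
    fun t ht => integrable_moment (h := fun x ξ => f x ξ t) (k := fun _ ξ => 1 + ‖ξ‖ ^ 2)
      (hft t) (fun x ξ => hf_nonneg x ξ t ht) (hf_int t ht) hwc hwb
  have hfφ : ∀ t, 0 ≤ t → Integrable fun p : E × E => f p.1 p.2 t * morawetz p.1 p.2 :=
    fun t ht => integrable_moment (h := fun x ξ => f x ξ t) (hft t)
      (fun x ξ => hf_nonneg x ξ t ht) (hf_int t ht) continuous_morawetz abs_morawetz_le
  have hle : ∀ t, 0 ≤ t → |∫ p : E × E, f p.1 p.2 t * morawetz p.1 p.2|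
      ≤ ∫ p : E × E, f p.1 p.2 t * (1 + ‖p.2‖ ^ 2) := by
    intro t ht
    refine abs_integral_le_integral_abs.trans
      (integral_mono (hfφ t ht).abs (hfw t ht) fun p => ?_)
    simp only [abs_mul, abs_of_nonneg (hf_nonneg p.1 p.2 t ht)]
    exact mul_le_mul_of_nonneg_left (abs_morawetz_le _ _) (hf_nonneg _ _ t ht)
  have hcons := integral_moment_eq hT h_mild
    (integrable_interaction (k := fun _ ξ => 1 + ‖ξ‖ ^ 2) hg_meas hg_int hwc hwb) h_moment
    (hfw 0 le_rfl)
  have hgφ := integrable_interaction hg_meas hg_int continuous_morawetz abs_morawetz_le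
  have hg1 := integrable_interaction (k := fun _ _ => 1) hg_meas hg_int continuous_const
    (fun _ ξ => by simp)
  have hFc : Continuous fun q : (E × E) × ℝ => f (q.1.1 + q.2 • q.1.2) q.1.2 q.2 :=
    hf_smooth.continuous.comp
      (by fun_prop : Continuous fun q : (E × E) × ℝ => ((q.1.1 + q.2 • q.1.2, q.1.2), q.2))
  have hψc : Continuous fun q : (E × E) × ℝ => morawetzFlux (q.1.1 + q.2 • q.1.2) q.1.2 :=
    continuous_morawetzFlux.comp
      (by fun_prop : Continuous fun q : (E × E) × ℝ => (q.1.1 + q.2 • q.1.2, q.1.2))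
  -- The boundary and interaction terms that the product rule leaves on each characteristic.
  set J : E × E → ℝ := fun p => f (p.1 + T • p.2) p.2 T * morawetz (p.1 + T • p.2) p.2
    - f p.1 p.2 0 * morawetz p.1 p.2
    - ∫ s in Icc (0:ℝ) T, g (p.1 + s • p.2) p.2 s * morawetz (p.1 + s • p.2) p.2 with hJ
  have hpt : ∀ᵐ p : E × E, ∫⁻ s in Icc 0 T, ENNReal.ofReal
      (f (p.1 + s • p.2) p.2 s * morawetzFlux (p.1 + s • p.2) p.2) = ENNReal.ofReal (J p) ∧
      0 ≤ J p := by
    filter_upwards [hg1.prod_right_ae] with p hp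
    have hline : Continuous fun s : ℝ => (p, s) := by fun_prop
    have hid := integral_along_characteristic (F := fun s => f (p.1 + s • p.2) p.2 s)
      (G := fun s => g (p.1 + s • p.2) p.2 s) (φ := fun s => morawetz (p.1 + s • p.2) p.2) hT
      (hf_smooth.comp
        (by fun_prop : ContDiff ℝ 1 fun s : ℝ => ((p.1 + s • p.2, p.2), s)))
      (hasDerivAt_morawetz p.1 p.2) (hψc.comp hline) (by simpa [IntegrableOn] using hp)
      (fun t ht => by simpa using h_mild p.1 p.2 t ht)
    have hnn : ∀ s ∈ Icc 0 T,
        0 ≤ f (p.1 + s • p.2) p.2 s * morawetzFlux (p.1 + s • p.2) p.2 := fun s hs =>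
      mul_nonneg (hf_nonneg _ _ _ hs.1) (morawetzFlux_nonneg _ _)
    have hJp : J p = ∫ s in Icc 0 T,
        f (p.1 + s • p.2) p.2 s * morawetzFlux (p.1 + s • p.2) p.2 := by
      rw [hid]; simp [hJ]
    refine ⟨?_, hJp ▸ setIntegral_nonneg measurableSet_Icc hnn⟩
    rw [hJp, ofReal_integral_eq_lintegral_ofReal]
    · exact ((hFc.comp hline).mul (hψc.comp hline)).continuousOn.integrableOn_Icc
    · exact (ae_restrict_iff' measurableSet_Icc).2 (Eventually.of_forall hnn)
  have hint1 : Integrable fun p : E × E =>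
      f (p.1 + T • p.2) p.2 T * morawetz (p.1 + T • p.2) p.2 :=
    ((measurePreserving_transport T).integrable_comp_emb (measurableEmbedding_transport T)).2
      (hfφ T hT.le)
  have hJint : Integrable J := (hint1.sub (hfφ 0 le_rfl)).sub hgφ.integral_prod_left
  have hJle : ∫ p, J p ≤ 2 * ∫ p : E × E, f p.1 p.2 0 * (1 + ‖p.2‖ ^ 2) := by
    have hsplit := integral_sub (hint1.sub (hfφ 0 le_rfl)) hgφ.integral_prod_left
    simp only [Pi.sub_apply] at hsplit
    rw [hJ, hsplit, integral_sub hint1 (hfφ 0 le_rfl), integral_interaction_eq_zero hgφ h_morawetz,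
      (measurePreserving_transport T).integral_comp (measurableEmbedding_transport T)
        (fun p : E × E => f p.1 p.2 T * morawetz p.1 p.2)]
    have h1 := (abs_le.1 (hle T hT.le)).2
    have h2 := (abs_le.1 (hle 0 le_rfl)).1
    rw [hcons] at h1
    linarith
  calc ∫⁻ t in Icc 0 T, ∫⁻ p : E × E, ENNReal.ofReal (f p.1 p.2 t * morawetzFlux p.1 p.2)
      = ∫⁻ t in Icc 0 T, ∫⁻ p : E × E, ENNReal.ofReal
          (f (p.1 + t • p.2) p.2 t * morawetzFlux (p.1 + t • p.2) p.2) := by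
        refine lintegral_congr fun t => ?_
        exact ((measurePreserving_transport t).lintegral_comp_emb
          (measurableEmbedding_transport t)
          (fun p : E × E => ENNReal.ofReal (f p.1 p.2 t * morawetzFlux p.1 p.2))).symm
    _ = ∫⁻ p : E × E, ∫⁻ t in Icc 0 T, ENNReal.ofReal
          (f (p.1 + t • p.2) p.2 t * morawetzFlux (p.1 + t • p.2) p.2) :=
        (lintegral_lintegral_swap
          (hFc.mul hψc).measurable.ennreal_ofReal.aemeasurable).symm
    _ = ∫⁻ p : E × E, ENNReal.ofReal (J p) :=
        lintegral_congr_ae (hpt.mono fun p hp => hp.1)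
    _ = ENNReal.ofReal (∫ p, J p) :=
        (ofReal_integral_eq_lintegral_ofReal hJint (hpt.mono fun p hp => hp.2)).symm
    _ ≤ _ := ENNReal.ofReal_le_ofReal hJle

end Helpers

/-- For every bounded spatial set `D` and every `v > 0`, the total mass of
particles in `D` with speed at least `v` is integrable over time:
`∫₀^∞ ∫_{|ξ|≥v} ∫_D f(x,ξ,t) dx dξ dt < ∞`. -/
theorem mass_fast_particles_time_integrable {n : ℕ} (hn : 2 ≤ n)
    (f g : EuclideanSpace ℝ (Fin n) → EuclideanSpace ℝ (Fin n) → ℝ → ℝ)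
    (hf_nonneg : ∀ x ξ t, (0:ℝ) ≤ t → 0 ≤ f x ξ t)
    (hf_meas : Measurable fun p : (EuclideanSpace ℝ (Fin n) × EuclideanSpace ℝ (Fin n)) × ℝ =>
      f p.1.1 p.1.2 p.2)
    (hg_meas : Measurable fun p : (EuclideanSpace ℝ (Fin n) × EuclideanSpace ℝ (Fin n)) × ℝ =>
      g p.1.1 p.1.2 p.2)
    -- mild solution along characteristics
    (h_mild : ∀ (x ξ : EuclideanSpace ℝ (Fin n)) (t : ℝ), 0 ≤ t →
      f (x + t • ξ) ξ t = f x ξ 0 + ∫ s in Icc (0:ℝ) t, g (x + s • ξ) ξ s)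
    -- `g` is a mesoscopic interaction
    (hmeso_mass : ∀ (t : ℝ), 0 ≤ t → ∀ x, Integrable (fun ξ => g x ξ t) ∧ ∫ ξ, g x ξ t = 0)
    (hmeso_mom : ∀ (t : ℝ), 0 ≤ t → ∀ x, Integrable (fun ξ => g x ξ t • ξ) ∧
      ∫ ξ, g x ξ t • ξ = (0 : EuclideanSpace ℝ (Fin n)))
    (hmeso_en : ∀ (t : ℝ), 0 ≤ t → ∀ x, Integrable (fun ξ => g x ξ t * ‖ξ‖ ^ 2) ∧
      ∫ ξ, g x ξ t * ‖ξ‖ ^ 2 = 0)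
    -- finiteness of mass, energy and second moments at every time
    (hf_int : ∀ (t : ℝ), 0 ≤ t →
      Integrable (fun p : EuclideanSpace ℝ (Fin n) × EuclideanSpace ℝ (Fin n) =>
        f p.1 p.2 t * (1 + ‖p.1‖ ^ 2 + ‖p.2‖ ^ 2)))
    -- integrability of the interaction along characteristics with second moments
    (hg_char_int : ∀ T : ℝ, 0 < T →
      Integrable (fun q : (EuclideanSpace ℝ (Fin n) × EuclideanSpace ℝ (Fin n)) × ℝ =>
        |g (q.1.1 + q.2 • q.1.2) q.1.2 q.2| * (1 + ‖q.1.1‖ ^ 2 + ‖q.1.2‖ ^ 2))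
        ((volume : Measure (EuclideanSpace ℝ (Fin n) × EuclideanSpace ℝ (Fin n))).prod
          (volume.restrict (Icc (0:ℝ) T))))
    -- the total energy
    (Energy : ℝ)
    (hE : Energy = ∫ p : EuclideanSpace ℝ (Fin n) × EuclideanSpace ℝ (Fin n),
      f p.1 p.2 0 * ‖p.2‖ ^ 2)
    -- `f` is smooth enough for the integration by parts in the spatial variable
    (hf_smooth : ContDiff ℝ 1 (fun p : (EuclideanSpace ℝ (Fin n) × EuclideanSpace ℝ (Fin n)) × ℝ =>
      f p.1.1 p.1.2 p.2))
    :
    ∀ D : Set (EuclideanSpace ℝ (Fin n)), Bornology.IsBounded D →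
      ∀ v : ℝ, 0 < v →
        ∫⁻ t in Ioi (0:ℝ), ∫⁻ ξ in {ξ : EuclideanSpace ℝ (Fin n) | v ≤ ‖ξ‖}, ∫⁻ x in D,
          ENNReal.ofReal (f x ξ t) < ⊤ := by
  intro D hD v hv
  obtain ⟨R, hR⟩ := hD.exists_norm_le
  have h_moment : ∀ t, 0 ≤ t → ∀ x, ∫ ξ, g x ξ t * (1 + ‖ξ‖ ^ 2) = 0 := by
    intro t ht x
    simp only [mul_add, mul_one]
    rw [integral_add (hmeso_mass t ht x).1 (hmeso_en t ht x).1, (hmeso_mass t ht x).2,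
      (hmeso_en t ht x).2, add_zero]
  have h_morawetz : ∀ t, 0 ≤ t → ∀ x, ∫ ξ, g x ξ t * morawetz x ξ = 0 := by
    intro t ht x
    have h1 : ∀ ξ, g x ξ t * morawetz x ξ = ⟪x, g x ξ t • ξ⟫ / √(1 + ‖x‖ ^ 2) := fun ξ => by
      rw [morawetz, inner_smul_right, real_inner_comm, mul_div_assoc]
    simp only [h1]
    rw [integral_div, integral_inner (hmeso_mom t ht x).1, (hmeso_mom t ht x).2]
    simp
  set C := ENNReal.ofReal (2 * ∫ p : EuclideanSpace ℝ (Fin n) × EuclideanSpace ℝ (Fin n),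
    f p.1 p.2 0 * (1 + ‖p.2‖ ^ 2)) with hC
  -- The lower bound for the flux on `‖x‖ ≤ R`, `v ≤ ‖ξ‖` is `1 / K`.
  set K : ℝ := √(1 + R ^ 2) ^ 3 / v ^ 2 with hK
  have hK0 : 0 ≤ K := by positivity
  have hflux : ∀ x ∈ D, ∀ ξ : EuclideanSpace ℝ (Fin n), v ≤ ‖ξ‖ → 1 ≤ K * morawetzFlux x ξ := by
    intro x hx ξ hξ
    have hw := sqrt_one_add_pos x
    have h1 : v ^ 2 / √(1 + R ^ 2) ^ 3 ≤ ‖ξ‖ ^ 2 / √(1 + ‖x‖ ^ 2) ^ 3 := by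
      have := hR x hx
      gcongr
    calc (1:ℝ) = K * (v ^ 2 / √(1 + R ^ 2) ^ 3) := by
          have : 0 < √(1 + R ^ 2) := by positivity
          rw [hK]; field_simp
      _ ≤ K * morawetzFlux x ξ :=
          mul_le_mul_of_nonneg_left (h1.trans (morawetzFlux_ge x ξ)) hK0
  have hmeas : ∀ t, Measurable
      fun p : EuclideanSpace ℝ (Fin n) × EuclideanSpace ℝ (Fin n) =>
        ENNReal.ofReal (f p.1 p.2 t * morawetzFlux p.1 p.2) := fun t =>
    ((hf_meas.comp (by fun_prop : Measurable
      fun p : EuclideanSpace ℝ (Fin n) × EuclideanSpace ℝ (Fin n) => (p, t))).mul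
      continuous_morawetzFlux.measurable).ennreal_ofReal
  have hslice : ∀ t, 0 ≤ t →
      ∫⁻ ξ in {ξ : EuclideanSpace ℝ (Fin n) | v ≤ ‖ξ‖}, ∫⁻ x in D, ENNReal.ofReal (f x ξ t)
        ≤ ENNReal.ofReal K * ∫⁻ p : EuclideanSpace ℝ (Fin n) × EuclideanSpace ℝ (Fin n),
          ENNReal.ofReal (f p.1 p.2 t * morawetzFlux p.1 p.2) := by
    intro t ht
    rw [Measure.volume_eq_prod, lintegral_prod_symm' _ (hmeas t),
      ← lintegral_const_mul' _ _ ENNReal.ofReal_ne_top]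
    refine le_trans ?_ (setLIntegral_le_lintegral {ξ | v ≤ ‖ξ‖} _)
    refine setLIntegral_mono' (measurableSet_le measurable_const measurable_norm) fun ξ hξ => ?_
    rw [← lintegral_const_mul' _ _ ENNReal.ofReal_ne_top]
    -- `D` need not be measurable, so it is enlarged to a superlevel set of the flux.
    refine le_trans (lintegral_mono_set (t := {x | 1 ≤ K * morawetzFlux x ξ})
      fun x hx => hflux x hx ξ hξ) ?_
    refine le_trans ?_ (setLIntegral_le_lintegral {x | 1 ≤ K * morawetzFlux x ξ} _)
    refine setLIntegral_mono' (measurableSet_le measurable_const ?_) fun x hx => ?_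
    · exact (continuous_const.mul (continuous_morawetzFlux.comp
        (by fun_prop : Continuous fun x : EuclideanSpace ℝ (Fin n) => (x, ξ)))).measurable
    · rw [← ENNReal.ofReal_mul hK0]
      refine ENNReal.ofReal_le_ofReal ?_
      have := mul_le_mul_of_nonneg_left (show 1 ≤ K * morawetzFlux x ξ from hx)
        (hf_nonneg x ξ t ht)
      linarith
  have hbound : ∀ N : ℕ, ∫⁻ t in Icc (0:ℝ) (N + 1),
      ∫⁻ ξ in {ξ : EuclideanSpace ℝ (Fin n) | v ≤ ‖ξ‖}, ∫⁻ x in D, ENNReal.ofReal (f x ξ t)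
        ≤ ENNReal.ofReal K * C := by
    intro N
    have hN : (0:ℝ) < N + 1 := by positivity
    refine (setLIntegral_mono' measurableSet_Icc fun t ht => hslice t ht.1).trans ?_
    rw [lintegral_const_mul' _ _ ENNReal.ofReal_ne_top]
    gcongr
    exact lintegral_flux_le hN hf_nonneg hg_meas h_mild h_moment h_morawetz hf_int
      (hg_char_int _ hN) hf_smooth
  have hcover : Ioi (0:ℝ) ⊆ ⋃ N : ℕ, Icc (0:ℝ) (N + 1) := by
    intro t ht
    obtain ⟨N, hN⟩ := exists_nat_ge t
    exact mem_iUnion.2 ⟨N, le_of_lt ht, by linarith⟩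
  have hmono : Monotone fun N : ℕ => Icc (0:ℝ) (N + 1) := fun a b hab =>
    Icc_subset_Icc_right (by have : (a:ℝ) ≤ b := by exact_mod_cast hab
                             linarith)
  refine (lintegral_mono_set hcover).trans_lt ?_
  rw [setLIntegral_iUnion_of_directed _ hmono.directed_le]
  exact (iSup_le hbound).trans_lt (ENNReal.mul_lt_top ENNReal.ofReal_lt_top ENNReal.ofReal_lt_top)
end
end
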